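/- Let p be a prime, N ≥ 1, let 𝔩(ξ) ∈ ℤ_p[ξ_1,…,ξ_N] be an elliptic polynomial of degree d, and let α > 0 and m > 0 be real numbers. Then there exist positive constants C_0 and C_1 such that C_0·[ξ]_p^{⌊dα⌋} ≤ |𝔩(ξ)|_p^{α} + m² ≤ C_1·[ξ]_p^{⌈dα⌉} for all ξ ∈ ℚ_p^N, where ⌊t⌋ and ⌈t⌉ denote the floor and ceiling of t and [ξ]_p := max(1, ‖ξ‖_p). -/

import Mathlib

open MvPolynomial

/-!
On the unit sphere of `K ^ ι`, which is compact, the norm of an elliptic polynomial is bounded below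
by some `a > 0`. Every nonzero `ξ` is a multiple of a unit vector by a scalar of norm `‖ξ‖`, namely
a coordinate of largest norm, so homogeneity gives `a ‖ξ‖ ^ d ≤ ‖P(ξ)‖`, while the triangle
inequality gives `‖P(ξ)‖ ≤ A ‖ξ‖ ^ d`. Adding a positive constant to `‖P(ξ)‖ ^ α` takes care of the
unit ball, where `[ξ] = 1`, and outside it `[ξ] = ‖ξ‖ ≥ 1`, so that rounding the exponent `d α` only
weakens the bounds.
-/

theorem eval_smul_of_isHomogeneous {σ R : Type*} [CommSemiring R] {P : MvPolynomial σ R} {d : ℕ}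
    (hP : P.IsHomogeneous d) (c : R) (x : σ → R) : eval (c • x) P = c ^ d * eval x P := by
  rw [eval_eq, eval_eq, Finset.mul_sum]
  refine Finset.sum_congr rfl fun s hs => ?_
  simp only [Pi.smul_apply, smul_eq_mul, mul_pow, Finset.prod_mul_distrib,
    Finset.prod_pow_eq_pow_sum, ← hP.degree_eq_sum_deg_support hs]
  ring

theorem exists_norm_apply_eq_pi_norm {ι E : Type*} [Fintype ι] [Nonempty ι]
    [SeminormedAddCommGroup E] (x : ι → E) : ∃ i, ‖x i‖ = ‖x‖ := by
  obtain ⟨i, hi⟩ := Finite.exists_max fun i => ‖x i‖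
  exact ⟨i, (norm_le_pi_norm x i).antisymm ((pi_norm_le_iff_of_nonneg (norm_nonneg _)).2 hi)⟩

theorem exists_eq_smul_norm_eq_one {ι K : Type*} [Fintype ι] [NormedDivisionRing K]
    {x : ι → K} (hx : x ≠ 0) : ∃ (c : K) (u : ι → K), ‖c‖ = ‖x‖ ∧ ‖u‖ = 1 ∧ x = c • u := by
  obtain ⟨j, -⟩ := Function.ne_iff.1 hx
  have : Nonempty ι := ⟨j⟩
  obtain ⟨i, hi⟩ := exists_norm_apply_eq_pi_norm x
  have hnorm : ‖x‖ ≠ 0 := norm_ne_zero_iff.2 hx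
  have hxi : x i ≠ 0 := norm_ne_zero_iff.1 (hi ▸ hnorm)
  refine ⟨x i, (x i)⁻¹ • x, hi, ?_, (smul_inv_smul₀ hxi x).symm⟩
  rw [norm_smul, norm_inv, hi, inv_mul_cancel₀ hnorm]

theorem exists_pos_mul_norm_pow_le_of_homogeneous {ι K : Type*} [Fintype ι]
    [NormedDivisionRing K] [ProperSpace K] {g : (ι → K) → ℝ} {d : ℕ} (hcont : Continuous g)
    (hhom : ∀ (c : K) x, g (c • x) = ‖c‖ ^ d * g x) (hpos : ∀ x ≠ 0, 0 < g x) :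
    ∃ a > 0, ∀ x ≠ 0, a * ‖x‖ ^ d ≤ g x := by
  obtain ⟨a, ha, hsphere⟩ := (isCompact_sphere (0 : ι → K) 1).exists_forall_le'
    hcont.continuousOn fun u hu => hpos u (ne_zero_of_mem_unit_sphere ⟨u, hu⟩)
  refine ⟨a, ha, fun x hx => ?_⟩
  obtain ⟨c, u, hc, hu, rfl⟩ := exists_eq_smul_norm_eq_one hx
  rw [hhom, ← hc, mul_comm a]
  gcongr
  exact hsphere u (mem_sphere_zero_iff_norm.2 hu)

theorem mul_pow_rpow {b x : ℝ} (hb : 0 ≤ b) (hx : 0 ≤ x) (d : ℕ) (α : ℝ) :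
    (b * x ^ d) ^ α = b ^ α * x ^ (d * α) := by
  rw [Real.mul_rpow hb (pow_nonneg hx d), Real.rpow_natCast_mul hx]

section HomogeneousPolynomial

variable {ι K : Type*} [Fintype ι] [NormedField K] {P : MvPolynomial ι K} {d : ℕ}

theorem norm_eval_le_of_isHomogeneous (hP : P.IsHomogeneous d) (ξ : ι → K) :
    ‖eval ξ P‖ ≤ (∑ s ∈ P.support, ‖P.coeff s‖) * ‖ξ‖ ^ d := by
  have hsup : ⨆ i, ‖ξ i‖ ≤ ‖ξ‖ := Real.iSup_le (norm_le_pi_norm ξ) (norm_nonneg ξ)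
  have hsup_nonneg : 0 ≤ ⨆ i, ‖ξ i‖ := Real.iSup_nonneg fun i => norm_nonneg (ξ i)
  calc ‖eval ξ P‖ ≤ (∑ s ∈ P.support, ‖P.coeff s‖) * (⨆ i, ‖ξ i‖) ^ d :=
        (NormedField.toAbsoluteValue K).eval_mvPolynomial_le hP ξ
    _ ≤ (∑ s ∈ P.support, ‖P.coeff s‖) * ‖ξ‖ ^ d := by gcongr

theorem exists_pos_mul_norm_pow_le_norm_eval [ProperSpace K] (hP : P.IsHomogeneous d)
    (hell : ∀ ξ ≠ 0, eval ξ P ≠ 0) : ∃ a > 0, ∀ ξ ≠ 0, a * ‖ξ‖ ^ d ≤ ‖eval ξ P‖ :=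
  exists_pos_mul_norm_pow_le_of_homogeneous P.continuous_eval.norm
    (fun c ξ => by rw [eval_smul_of_isHomogeneous hP, norm_mul, norm_pow])
    fun ξ hξ => norm_pos_iff.2 (hell ξ hξ)

variable {α c : ℝ}

theorem exists_pos_mul_max_rpow_le_norm_eval_rpow_add [ProperSpace K] {s : ℝ}
    (hP : P.IsHomogeneous d) (hell : ∀ ξ ≠ 0, eval ξ P ≠ 0) (hα : 0 ≤ α) (hc : 0 < c)
    (hs : s ≤ d * α) : ∃ C > 0, ∀ ξ : ι → K, C * max 1 ‖ξ‖ ^ s ≤ ‖eval ξ P‖ ^ α + c := by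
  obtain ⟨a, ha, hlower⟩ := exists_pos_mul_norm_pow_le_norm_eval hP hell
  refine ⟨min c (a ^ α), by positivity, fun ξ => ?_⟩
  have hvalue : 0 ≤ ‖eval ξ P‖ ^ α := by positivity
  rcases le_total ‖ξ‖ 1 with hball | hball
  · rw [max_eq_left hball, Real.one_rpow, mul_one]
    exact (min_le_left _ _).trans (le_add_of_nonneg_left hvalue)
  · have hξ : ξ ≠ 0 := norm_pos_iff.1 (one_pos.trans_le hball)
    rw [max_eq_right hball]
    calc min c (a ^ α) * ‖ξ‖ ^ s
        ≤ a ^ α * ‖ξ‖ ^ (d * α) := by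
          gcongr
          exact min_le_right _ _
      _ = (a * ‖ξ‖ ^ d) ^ α := (mul_pow_rpow ha.le (norm_nonneg ξ) d α).symm
      _ ≤ ‖eval ξ P‖ ^ α := by
          gcongr
          exact hlower ξ hξ
      _ ≤ ‖eval ξ P‖ ^ α + c := le_add_of_nonneg_right hc.le

theorem exists_norm_eval_rpow_add_le_mul_max_rpow {t : ℝ} (hP : P.IsHomogeneous d) (hα : 0 ≤ α)
    (hc : 0 < c) (ht : d * α ≤ t) :
    ∃ C > 0, ∀ ξ : ι → K, ‖eval ξ P‖ ^ α + c ≤ C * max 1 ‖ξ‖ ^ t := by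
  set A : ℝ := ∑ s ∈ P.support, ‖P.coeff s‖
  have hA : 0 ≤ A := by positivity
  refine ⟨A ^ α + c, by positivity, fun ξ => ?_⟩
  set M : ℝ := max 1 ‖ξ‖
  have hM : 1 ≤ M := le_max_left _ _
  have hupper : ‖eval ξ P‖ ≤ A * M ^ d :=
    calc ‖eval ξ P‖ ≤ A * ‖ξ‖ ^ d := norm_eval_le_of_isHomogeneous hP ξ
      _ ≤ A * M ^ d := by
          gcongr
          exact le_max_right _ _
  have hvalue : ‖eval ξ P‖ ^ α ≤ A ^ α * M ^ t :=
    calc ‖eval ξ P‖ ^ α ≤ (A * M ^ d) ^ α := by gcongr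
      _ = A ^ α * M ^ (d * α) := mul_pow_rpow hA (zero_le_one.trans hM) d α
      _ ≤ A ^ α * M ^ t := by gcongr
  have hconst : c ≤ c * M ^ t :=
    le_mul_of_one_le_right hc.le (Real.one_le_rpow hM ((by positivity : 0 ≤ d * α).trans ht))
  rw [add_mul]
  exact add_le_add hvalue hconst

theorem elliptic_symbol_floor_ceil_bounds_general [ProperSpace K] {s t : ℝ}
    (hP : P.IsHomogeneous d) (hell : ∀ ξ ≠ 0, eval ξ P ≠ 0) (hα : 0 ≤ α) (hc : 0 < c)
    (hs : s ≤ d * α) (ht : d * α ≤ t) :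
    ∃ C₀ C₁ : ℝ, 0 < C₀ ∧ 0 < C₁ ∧ ∀ ξ : ι → K,
      C₀ * max 1 ‖ξ‖ ^ s ≤ ‖eval ξ P‖ ^ α + c ∧ ‖eval ξ P‖ ^ α + c ≤ C₁ * max 1 ‖ξ‖ ^ t := by
  obtain ⟨C₀, hC₀, hlower⟩ := exists_pos_mul_max_rpow_le_norm_eval_rpow_add hP hell hα hc hs
  obtain ⟨C₁, hC₁, hupper⟩ := exists_norm_eval_rpow_add_le_mul_max_rpow hP hα hc ht
  exact ⟨C₀, C₁, hC₀, hC₁, fun ξ => ⟨hlower ξ, hupper ξ⟩⟩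

end HomogeneousPolynomial

/-- For an elliptic polynomial `L` of degree `d` and reals `α > 0`, `m > 0`,
there exist positive constants `C₀, C₁` such that
`C₀ [ξ]_p^{⌊dα⌋} ≤ |L(ξ)|_p^α + m² ≤ C₁ [ξ]_p^{⌈dα⌉}` for all `ξ ∈ ℚ_p^N`,
where `[ξ]_p = max(1, ‖ξ‖_p)`. -/
theorem elliptic_symbol_floor_ceil_bounds
    (p : ℕ) [Fact p.Prime] (N : ℕ) (hN : 1 ≤ N)
    (d : ℕ) (hd : 1 ≤ d) (L : MvPolynomial (Fin N) ℤ_[p])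
    (hhom : L.IsHomogeneous d)
    (hell : ∀ ξ : Fin N → ℚ_[p], eval₂ PadicInt.Coe.ringHom ξ L = 0 ↔ ξ = 0)
    (α m : ℝ) (hα : 0 < α) (hm : 0 < m) :
    ∃ C₀ C₁ : ℝ, 0 < C₀ ∧ 0 < C₁ ∧
      ∀ ξ : Fin N → ℚ_[p],
        C₀ * (max 1 ‖ξ‖) ^ ((⌊(d : ℝ) * α⌋ : ℝ)) ≤
            ‖eval₂ PadicInt.Coe.ringHom ξ L‖ ^ α + m ^ 2 ∧
        ‖eval₂ PadicInt.Coe.ringHom ξ L‖ ^ α + m ^ 2 ≤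
            C₁ * (max 1 ‖ξ‖) ^ ((⌈(d : ℝ) * α⌉ : ℝ)) := by
  simp only [← eval_map] at hell ⊢
  exact elliptic_symbol_floor_ceil_bounds_general (hhom.map _) (fun ξ => mt (hell ξ).1) hα.le
    (pow_pos hm 2) (Int.floor_le _) (Int.le_ceil _)
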